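/- arXiv:2604.13913 — 3 statements merged into one kernel-verified Lean document; each statement's English description precedes it below -/
import Mathlib

section
/- Let b > 1 and β ∈ (0, 1/2). For almost every pair (Θ, Λ) ∈ [0,1]^ℕ × [0,1]^ℕ (with respect to the infinite product of uniform measures on [0,1]), the Hausdorff dimension of the graph G(f_{Θ,Λ}) = {(t, f_{Θ,Λ}(t)) : t ∈ [0,1]} ⊂ ℝ³ is at least 3 − 2β. -/
open MeasureTheory

/-- First coordinate of the random vector-valued Weierstrass function
`t ↦ ∑ b^{-βn} cos(2π(bⁿ t + θₙ))`. -/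
noncomputable def W1 (b β : ℝ) (Θ : ℕ → ℝ) (t : ℝ) : ℝ :=
  ∑' n : ℕ, b ^ (-β * (n : ℝ)) * Real.cos (2 * Real.pi * (b ^ n * t + Θ n))

/-- Second coordinate of the random vector-valued Weierstrass function
`t ↦ ∑ b^{-βn} sin(2π(bⁿ t + λₙ))`. -/
noncomputable def W2 (b β : ℝ) (Λ : ℕ → ℝ) (t : ℝ) : ℝ :=
  ∑' n : ℕ, b ^ (-β * (n : ℝ)) * Real.sin (2 * Real.pi * (b ^ n * t + Λ n))

/-- Euclidean distance `|f_{Θ,Λ}(x) - f_{Θ,Λ}(y)|` in ℝ². -/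
noncomputable def Wdist (b β : ℝ) (Θ Λ : ℕ → ℝ) (x y : ℝ) : ℝ :=
  Real.sqrt ((W1 b β Θ x - W1 b β Θ y) ^ 2 + (W2 b β Λ x - W2 b β Λ y) ^ 2)

/-- The graph `G(f_{Θ,Λ}) = {(t, f_{Θ,Λ}(t)) : t ∈ [0,1]}` inside ℝ³ = ℝ × ℝ². -/
def Wgraph (b β : ℝ) (Θ Λ : ℕ → ℝ) : Set (ℝ × ℝ × ℝ) :=
  {p | ∃ t ∈ Set.Icc (0 : ℝ) 1, p = (t, W1 b β Θ t, W2 b β Λ t)}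

/-- `μ` is the infinite product over `ℕ` of the uniform probability measures on `[0,1]`:
the measure of every measurable cylinder is the corresponding finite product of
uniform measures. -/
def IsUniformProductMeasure (μ : Measure (ℕ → ℝ)) : Prop :=
  ∀ (t : Finset ℕ) (s : ℕ → Set ℝ), (∀ i, MeasurableSet (s i)) →
    μ {f : ℕ → ℝ | ∀ i ∈ t, f i ∈ s i} =
      ∏ i ∈ t, (volume.restrict (Set.Icc (0 : ℝ) 1)) (s i)

open scoped ENNReal NNReal

lemma sing_finite (t : ℝ) (ht : t < 1) :
    ∫⁻ w in Set.Icc (-1 : ℝ) 1, ENNReal.ofReal |w| ^ (-t) ≠ ⊤ := by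
  have h1 : ∫⁻ w in Set.Ioc (0 : ℝ) 1, ENNReal.ofReal |w| ^ (-t) ≠ ⊤ := by
    have h := (intervalIntegral.intervalIntegrable_rpow' (a := 0) (b := 1) (r := -t) (by linarith)).1
    have h2 := h.lintegral_lt_top
    refine ne_of_lt (lt_of_eq_of_lt ?_ h2)
    refine setLIntegral_congr_fun measurableSet_Ioc ?_
    intro w hw
    simp only
    rw [abs_of_pos hw.1, ENNReal.ofReal_rpow_of_pos hw.1]
  have h2 : ∫⁻ w in Set.Ico (-1 : ℝ) 0, ENNReal.ofReal |w| ^ (-t) ≠ ⊤ := by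
    have := (Measure.measurePreserving_neg (volume : Measure ℝ)).setLIntegral_comp_preimage_emb
      (MeasurableEquiv.neg ℝ).measurableEmbedding (fun w => ENNReal.ofReal |w| ^ (-t)) (Set.Ioc 0 1)
    simp only [abs_neg] at this
    rw [← this] at h1
    convert h1 using 3
    ext x; simp [neg_le, and_comm]
  have h3 : Set.Icc (-1 : ℝ) 1 = (Set.Ico (-1 : ℝ) 0 ∪ Set.Ioc 0 1) ∪ {0} := by
    ext x
    simp only [Set.mem_Icc, Set.mem_union, Set.mem_Ico, Set.mem_Ioc, Set.mem_singleton_iff]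
    rcases lt_trichotomy x 0 with h | h | h
    · constructor
      · intro h'; left; left; exact ⟨h'.1, h⟩
      · rintro ((h'|h')|h')
        · constructor <;> linarith [h'.1, h'.2]
        · constructor <;> linarith [h'.1, h'.2]
        · constructor <;> linarith
    · subst h; simp
    · constructor
      · intro h'; left; right; exact ⟨h, h'.2⟩
      · rintro ((h'|h')|h') 
        · constructor <;> linarith [h'.1, h'.2]
        · constructor <;> linarith [h'.1, h'.2]
        · constructor <;> linarith
  rw [h3]
  refine ne_of_lt (lt_of_le_of_lt (lintegral_union_le _ _ _) ?_)
  refine ENNReal.add_lt_top.2 ⟨lt_of_le_of_lt (lintegral_union_le _ _ _) ?_, ?_⟩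
  · exact ENNReal.add_lt_top.2 ⟨h2.lt_top, h1.lt_top⟩
  · simp

lemma sing_bound (t : ℝ) (ht0 : 0 < t) (S : Set ℝ) (z : ℝ) :
    ∫⁻ w in S, ENNReal.ofReal |w + z| ^ (-t) ≤
      volume S + ∫⁻ w in Set.Icc (-1 : ℝ) 1, ENNReal.ofReal |w| ^ (-t) := by
  set F : ℝ → ℝ≥0∞ := (Set.Icc (-1 : ℝ) 1).indicator (fun w => ENNReal.ofReal |w| ^ (-t)) with hF
  have hp : ∀ w, ENNReal.ofReal |w + z| ^ (-t) ≤ 1 + F (w + z) := by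
    intro w
    by_cases h : w + z ∈ Set.Icc (-1 : ℝ) 1
    · simp [hF, Set.indicator_of_mem h]
    · refine le_add_right ?_
      rw [ENNReal.rpow_neg]
      refine ENNReal.inv_le_one.2 (ENNReal.one_le_rpow ?_ ht0)
      rw [ENNReal.one_le_ofReal]
      by_contra hc
      exact h (abs_le.1 (le_of_lt (not_le.1 hc)))
  calc _ ≤ ∫⁻ w in S, (1 + F (w + z)) := lintegral_mono hp
    _ = volume S + ∫⁻ w in S, F (w + z) := by
      rw [lintegral_add_left measurable_const]; simp
    _ ≤ volume S + ∫⁻ w, F (w + z) := by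
      gcongr; exact Measure.restrict_le_self
    _ = _ := by
      rw [lintegral_add_right_eq_self (μ := volume) F z, hF, lintegral_indicator measurableSet_Icc]

lemma cov (g : ℝ → ℝ≥0∞) (φ : ℝ) :
    ∫⁻ u in Set.Icc (0 : ℝ) 1, g (Real.sin (2 * Real.pi * u + φ)) *
        ENNReal.ofReal |Real.cos (2 * Real.pi * u + φ)| ≤
      4 * ∫⁻ w in Set.Icc (-1 : ℝ) 1, g w := by
  have hpi := Real.pi_pos
  let J : ℤ → Set ℝ := fun k => {u | 2 * Real.pi * u + φ - k * Real.pi ∈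
    Set.Icc (-(Real.pi / 2)) (Real.pi / 2)}
  have hJm : ∀ k, MeasurableSet (J k) := fun k =>
    measurableSet_Icc.preimage (by fun_prop)
  have hJ : ∀ k, ∫⁻ u in J k, g (Real.sin (2 * Real.pi * u + φ)) *
        ENNReal.ofReal |Real.cos (2 * Real.pi * u + φ)| ≤ ∫⁻ w in Set.Icc (-1 : ℝ) 1, g w := by
    intro k
    have hd : ∀ u ∈ J k, HasDerivWithinAt (fun u => Real.sin (2 * Real.pi * u + φ))
        (Real.cos (2 * Real.pi * u + φ) * (2 * Real.pi)) (J k) u := by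
      intro u _
      have h1 : HasDerivAt (fun u : ℝ => 2 * Real.pi * u + φ) (2 * Real.pi) u := by
        simpa using ((hasDerivAt_id u).const_mul (2 * Real.pi)).add_const φ
      exact h1.sin.hasDerivWithinAt
    have hinj : Set.InjOn (fun u => Real.sin (2 * Real.pi * u + φ)) (J k) := by
      intro u hu v hv huv
      simp only at huv
      have h2 : Real.sin (2 * Real.pi * u + φ - k * Real.pi) =
          Real.sin (2 * Real.pi * v + φ - k * Real.pi) := by
        rw [Real.sin_sub_int_mul_pi, Real.sin_sub_int_mul_pi, huv]
      have h3 := Real.injOn_sin hu hv h2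
      have : 2 * Real.pi * u = 2 * Real.pi * v := by linarith
      exact mul_left_cancel₀ (by positivity) this
    have h := lintegral_image_eq_lintegral_abs_deriv_mul (hJm k) hd hinj g
    calc _ ≤ ∫⁻ u in J k, ENNReal.ofReal |Real.cos (2 * Real.pi * u + φ) * (2 * Real.pi)| *
          g (Real.sin (2 * Real.pi * u + φ)) := by
          refine lintegral_mono fun u => ?_
          rw [mul_comm]
          refine mul_le_mul_left (ENNReal.ofReal_le_ofReal ?_) _
          rw [abs_mul]
          refine le_mul_of_one_le_right (abs_nonneg _) ?_
          rw [abs_of_pos (by positivity)]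
          linarith [Real.pi_gt_three]
      _ = _ := h.symm
      _ ≤ _ := by
          refine lintegral_mono_set ?_
          rintro _ ⟨u, _, rfl⟩
          exact Real.sin_mem_Icc _
  have hcov : Set.Icc (0 : ℝ) 1 ⊆ ⋃ i : Fin 4, J (⌊φ / Real.pi⌋ + (i : ℕ)) := by
    intro u hu
    have h1 : ⌊φ / Real.pi⌋ ≤ round ((2 * Real.pi * u + φ) / Real.pi) := by
      rw [round_eq]
      refine Int.floor_mono ?_
      have : φ / Real.pi ≤ (2 * Real.pi * u + φ) / Real.pi := by
        gcongr; nlinarith [hu.1]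
      linarith
    have h2 : round ((2 * Real.pi * u + φ) / Real.pi) ≤ ⌊φ / Real.pi⌋ + 3 := by
      rw [round_eq, ← Int.lt_add_one_iff, Int.floor_lt]
      have : (2 * Real.pi * u + φ) / Real.pi ≤ 2 + φ / Real.pi := by
        rw [add_div]; gcongr
        rw [div_le_iff₀ hpi]; nlinarith [hu.2]
      have := Int.lt_floor_add_one (φ / Real.pi)
      push_cast; linarith
    obtain ⟨i, hi⟩ := Int.eq_ofNat_of_zero_le (sub_nonneg.2 h1)
    have hi4 : i < 4 := by omega
    refine Set.mem_iUnion.2 ⟨⟨i, hi4⟩, ?_⟩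
    have : ⌊φ / Real.pi⌋ + (i : ℤ) = round ((2 * Real.pi * u + φ) / Real.pi) := by omega
    simp only [J, this, Set.mem_ofPred_eq]
    have h3 := abs_le.1 (abs_sub_round ((2 * Real.pi * u + φ) / Real.pi))
    have e : 2 * Real.pi * u + φ = ((2 * Real.pi * u + φ) / Real.pi) * Real.pi := by field_simp
    constructor
    · nlinarith [h3.1]
    · nlinarith [h3.2]
  calc _ ≤ _ := lintegral_mono_set hcov
    _ ≤ _ := lintegral_iUnion_le _ _
    _ ≤ ∑' i : Fin 4, ∫⁻ w in Set.Icc (-1 : ℝ) 1, g w := ENNReal.tsum_le_tsum fun i => hJ _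
    _ = _ := by rw [tsum_fintype]; simp

lemma cosint (p : ℝ) (hp0 : 0 < p) (hp : p < 1) (φ : ℝ) :
    ∫⁻ u in Set.Icc (0 : ℝ) 1, ENNReal.ofReal |Real.cos (2 * Real.pi * u + φ)| ^ (-p) ≤
      4 * (∫⁻ w in Set.Icc (-1 : ℝ) 1, ENNReal.ofReal |w| ^ (-p)) + 1 := by
  have h := cov (fun w => ENNReal.ofReal |w| ^ (-p)) (φ + Real.pi / 2)
  simp only [← add_assoc, Real.sin_add_pi_div_two, Real.cos_add_pi_div_two, abs_neg] at h
  calc _ ≤ ∫⁻ u in Set.Icc (0 : ℝ) 1, (ENNReal.ofReal |Real.cos (2 * Real.pi * u + φ)| ^ (-p) *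
        ENNReal.ofReal |Real.sin (2 * Real.pi * u + φ)| + 1) := by
        refine lintegral_mono fun u => ?_
        set θ := 2 * Real.pi * u + φ
        by_cases hc : Real.cos θ = 0
        · have hs : |Real.sin θ| = 1 := by
            have := Real.sin_sq_add_cos_sq θ
            rw [hc] at this
            rw [← sq_eq_sq₀ (abs_nonneg _) zero_le_one, sq_abs]; linarith
          simp [hs]
        · have hc' : 0 < |Real.cos θ| := abs_pos.2 hc
          rw [ENNReal.ofReal_rpow_of_pos hc', ← ENNReal.ofReal_mul (by positivity),
            ← ENNReal.ofReal_one, ← ENNReal.ofReal_add (by positivity) zero_le_one]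
          refine ENNReal.ofReal_le_ofReal ?_
          have h1 := Real.abs_cos_le_one θ
          have h2 := Real.abs_sin_le_one θ
          have h3 := Real.sin_sq_add_cos_sq θ
          rw [← sq_abs, ← sq_abs (Real.cos θ)] at h3
          have h4 : |Real.cos θ| ^ (-p) * |Real.cos θ| ^ 2 ≤ 1 := by
            rw [← Real.rpow_natCast, ← Real.rpow_add hc']
            exact Real.rpow_le_one (abs_nonneg _) h1 (by push_cast; linarith)
          have h5 : 0 < |Real.cos θ| ^ (-p) := by positivity
          have h6 : |Real.sin θ| ^ 2 ≤ |Real.sin θ| := by nlinarith [abs_nonneg (Real.sin θ)]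
          calc |Real.cos θ| ^ (-p) = |Real.cos θ| ^ (-p) * |Real.sin θ| ^ 2 +
                |Real.cos θ| ^ (-p) * |Real.cos θ| ^ 2 := by rw [← mul_add, h3, mul_one]
            _ ≤ _ := by gcongr
    _ = (∫⁻ u in Set.Icc (0 : ℝ) 1, (ENNReal.ofReal |Real.cos (2 * Real.pi * u + φ)| ^ (-p) *
        ENNReal.ofReal |Real.sin (2 * Real.pi * u + φ)|)) + 1 := by
        rw [lintegral_add_right _ measurable_const]; simp
    _ ≤ _ := by gcongr

lemma one_le_split (a b : ℝ≥0∞) (p : ℝ) (hp : 0 < p) (ha : a ≠ 0) (ha' : a ≠ ⊤) :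
    1 ≤ a ^ p * b ^ (-p) + b ^ p * a ^ (-p) := by
  have h0 : a ^ p ≠ 0 := by simp [ENNReal.rpow_eq_zero_iff, ha, ha']
  have h1 : a ^ p ≠ ⊤ := ENNReal.rpow_ne_top_of_nonneg hp.le ha'
  rw [ENNReal.rpow_neg, ENNReal.rpow_neg, ← ENNReal.mul_inv_cancel h0 h1]
  rcases le_total (b ^ p) (a ^ p) with h | h
  · refine le_add_right ?_
    gcongr
  · refine le_add_left ?_
    gcongr

lemma young (y : ℝ≥0∞) (p : ℝ) (hp0 : 0 < p) (hp : p < 1) : y ^ p ≤ 1 + y := by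
  rcases le_total y 1 with h | h
  · exact le_add_right (ENNReal.rpow_le_one h hp0.le)
  · refine le_add_left ?_
    calc y ^ p ≤ y ^ (1 : ℝ) := ENNReal.rpow_le_rpow_of_exponent_le h hp.le
      _ = y := ENNReal.rpow_one y

lemma one_term (p t : ℝ) (hp0 : 0 < p) (hp : p < 1) (ht0 : 0 < t) (A φ z : ℝ) (hA : 1 ≤ |A|) :
    ∫⁻ u in Set.Icc (0 : ℝ) 1, ENNReal.ofReal |Real.cos (2 * Real.pi * u + φ)| ^ p *
        ENNReal.ofReal |z + A * Real.sin (2 * Real.pi * u + φ)| ^ (-(t * p)) ≤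
      1 + 4 * (2 + ∫⁻ w in Set.Icc (-1 : ℝ) 1, ENNReal.ofReal |w| ^ (-t)) := by
  have hA0 : A ≠ 0 := by rintro rfl; norm_num at hA
  have h1 : ∀ u, ENNReal.ofReal |Real.cos (2 * Real.pi * u + φ)| ^ p *
        ENNReal.ofReal |z + A * Real.sin (2 * Real.pi * u + φ)| ^ (-(t * p)) ≤
      1 + ENNReal.ofReal |Real.sin (2 * Real.pi * u + φ) + z / A| ^ (-t) *
        ENNReal.ofReal |Real.cos (2 * Real.pi * u + φ)| := by
    intro u
    set w := Real.sin (2 * Real.pi * u + φ)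
    set c := ENNReal.ofReal |Real.cos (2 * Real.pi * u + φ)|
    calc _ ≤ c ^ p * ENNReal.ofReal |w + z / A| ^ (-(t * p)) := by
          refine mul_le_mul_right ?_ _
          rw [ENNReal.rpow_neg, ENNReal.rpow_neg]
          refine ENNReal.inv_le_inv.2 ?_
          refine ENNReal.rpow_le_rpow (ENNReal.ofReal_le_ofReal ?_) (by positivity)
          have : z + A * w = A * (w + z / A) := by field_simp; ring
          rw [this, abs_mul]
          exact le_mul_of_one_le_left (abs_nonneg _) hA
      _ = (ENNReal.ofReal |w + z / A| ^ (-t) * c) ^ p := by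
          rw [ENNReal.mul_rpow_of_nonneg _ _ hp0.le, ← ENNReal.rpow_mul, mul_comm]
          congr 2; ring
      _ ≤ _ := young _ _ hp0 hp
  calc _ ≤ _ := lintegral_mono h1
    _ = 1 + _ := by
      rw [lintegral_add_left measurable_const]
      congr 1
      simp
    _ ≤ 1 + 4 * ∫⁻ w in Set.Icc (-1 : ℝ) 1, ENNReal.ofReal |w + z / A| ^ (-t) := by
      gcongr
      exact cov (fun w => ENNReal.ofReal |w + z / A| ^ (-t)) φ
    _ ≤ _ := by
      gcongr
      refine (sing_bound t ht0 _ _).trans ?_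
      gcongr
      simp; norm_num

lemma two_term_one (s : ℝ) (hs0 : 0 < s) (hs : s < 1) : ∃ C : ℝ≥0∞, C ≠ ⊤ ∧
    ∀ A B φ ψ z : ℝ, 1 ≤ |A| → 1 ≤ |B| →
      ∫⁻ u in Set.Icc (0 : ℝ) 1, ∫⁻ v in Set.Icc (0 : ℝ) 1,
        ENNReal.ofReal |z + A * Real.sin (2 * Real.pi * u + φ) +
          B * Real.sin (2 * Real.pi * v + ψ)| ^ (-s) ≤ C := by
  obtain ⟨p, hsp, hp⟩ := exists_between hs
  have hp0 : 0 < p := hs0.trans hsp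
  set t := s / p with ht
  have ht0 : 0 < t := by positivity
  have ht1 : t < 1 := (div_lt_one hp0).2 hsp
  have htp : t * p = s := by rw [ht]; field_simp
  set K : ℝ≥0∞ := 1 + 4 * (2 + ∫⁻ w in Set.Icc (-1 : ℝ) 1, ENNReal.ofReal |w| ^ (-t)) with hK
  set L : ℝ≥0∞ := 4 * (∫⁻ w in Set.Icc (-1 : ℝ) 1, ENNReal.ofReal |w| ^ (-p)) + 1 with hL
  have hKt : K ≠ ⊤ := by
    have := sing_finite t ht1
    finiteness
  have hLt : L ≠ ⊤ := by
    have := sing_finite p hp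
    finiteness
  refine ⟨K * L + K * L, by finiteness, ?_⟩
  intro A B φ ψ z hA hB
  set a : ℝ → ℝ≥0∞ := fun u => ENNReal.ofReal |Real.cos (2 * Real.pi * u + φ)| with ha
  set b : ℝ → ℝ≥0∞ := fun u => ENNReal.ofReal |Real.cos (2 * Real.pi * u + ψ)| with hb
  set H : ℝ → ℝ → ℝ≥0∞ := fun u v => ENNReal.ofReal |z + A * Real.sin (2 * Real.pi * u + φ) +
          B * Real.sin (2 * Real.pi * v + ψ)| ^ (-s) with hH
  have hHm : Measurable (Function.uncurry H) := by
    simp only [hH, Function.uncurry_def]; fun_prop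
  have ham : Measurable a := by fun_prop
  have hbm : Measurable b := by fun_prop
  have hHu : ∀ u, Measurable (H u) := fun u => by fun_prop
  have hHv : ∀ v, Measurable (fun u => H u v) := fun u => by fun_prop
  have hae : ∀ᵐ u ∂(volume.restrict (Set.Icc (0 : ℝ) 1)), a u ≠ 0 := by
    have h1 : ∫⁻ u in Set.Icc (0 : ℝ) 1, a u ^ (-p) ≠ ⊤ :=
      ne_top_of_le_ne_top hLt (cosint p hp0 hp φ)
    have h2 := ae_lt_top (by fun_prop) h1
    filter_upwards [h2] with u hu h0
    rw [h0, ENNReal.zero_rpow_of_neg (by linarith)] at hu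
    exact lt_irrefl _ hu
  calc ∫⁻ u in Set.Icc (0 : ℝ) 1, ∫⁻ v in Set.Icc (0 : ℝ) 1, H u v 
      ≤ ∫⁻ u in Set.Icc (0 : ℝ) 1, ∫⁻ v in Set.Icc (0 : ℝ) 1,
        ((a u ^ p * H u v) * b v ^ (-p) + (b v ^ p * H u v) * a u ^ (-p)) := by
        refine lintegral_mono_ae ?_
        filter_upwards [hae] with u hu
        refine lintegral_mono fun v => ?_
        have := one_le_split (a u) (b v) p hp0 hu ENNReal.ofReal_ne_top
        calc H u v = 1 * H u v := (one_mul _).symm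
          _ ≤ (a u ^ p * b v ^ (-p) + b v ^ p * a u ^ (-p)) * H u v := by gcongr
          _ = _ := by ring
    _ = (∫⁻ u in Set.Icc (0 : ℝ) 1, ∫⁻ v in Set.Icc (0 : ℝ) 1, (a u ^ p * H u v) * b v ^ (-p)) +
        ∫⁻ u in Set.Icc (0 : ℝ) 1, ∫⁻ v in Set.Icc (0 : ℝ) 1, (b v ^ p * H u v) * a u ^ (-p) := by
        rw [← lintegral_add_right]
        · refine lintegral_congr fun u => ?_
          rw [lintegral_add_right]
          exact ((hbm.pow_const p).mul (hHu u)).mul_const _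
        · refine Measurable.lintegral_prod_right' (f := fun q : ℝ × ℝ =>
            (b q.2 ^ p * H q.1 q.2) * a q.1 ^ (-p)) ?_
          exact (((hbm.comp measurable_snd).pow_const p).mul hHm).mul
            ((ham.comp measurable_fst).pow_const _)
    _ ≤ K * L + K * L := by
        refine add_le_add ?_ ?_
        · rw [lintegral_lintegral_swap]
          · calc _ = ∫⁻ v in Set.Icc (0 : ℝ) 1, (∫⁻ u in Set.Icc (0 : ℝ) 1, a u ^ p * H u v) *
                  b v ^ (-p) := by
                  refine lintegral_congr fun v => ?_
                  exact lintegral_mul_const _ ((ham.pow_const p).mul (hHv v))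
              _ ≤ ∫⁻ v in Set.Icc (0 : ℝ) 1, K * b v ^ (-p) := by
                  refine lintegral_mono fun v => ?_
                  gcongr
                  have := one_term p t hp0 hp ht0 A φ (z + B * Real.sin (2 * Real.pi * v + ψ)) hA
                  rw [htp] at this
                  refine le_trans (le_of_eq ?_) this
                  refine lintegral_congr fun u => ?_
                  simp only [ha, hH]
                  congr 4; ring
              _ = K * ∫⁻ v in Set.Icc (0 : ℝ) 1, b v ^ (-p) :=
                  lintegral_const_mul _ (hbm.pow_const _)
              _ ≤ K * L := by gcongr; exact cosint p hp0 hp ψ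
          · refine Measurable.aemeasurable ?_
            exact (((ham.comp measurable_fst).pow_const p).mul hHm).mul
              ((hbm.comp measurable_snd).pow_const _)
        · calc _ = ∫⁻ u in Set.Icc (0 : ℝ) 1, (∫⁻ v in Set.Icc (0 : ℝ) 1, b v ^ p * H u v) *
                  a u ^ (-p) := by
                  refine lintegral_congr fun v => ?_
                  exact lintegral_mul_const _ ((hbm.pow_const p).mul (hHu v))
              _ ≤ ∫⁻ u in Set.Icc (0 : ℝ) 1, K * a u ^ (-p) := by
                  refine lintegral_mono fun u => ?_
                  gcongr
                  have := one_term p t hp0 hp ht0 B ψ (z + A * Real.sin (2 * Real.pi * u + φ)) hB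
                  rw [htp] at this
                  exact this
              _ = K * ∫⁻ v in Set.Icc (0 : ℝ) 1, a v ^ (-p) :=
                  lintegral_const_mul _ (ham.pow_const _)
              _ ≤ K * L := by gcongr; exact cosint p hp0 hp φ

lemma two_term (s : ℝ) (hs0 : 0 < s) (hs : s < 1) : ∃ C : ℝ≥0∞, C ≠ ⊤ ∧
    ∀ A B c φ ψ z : ℝ, 0 < c → c ≤ |A| → c ≤ |B| →
      ∫⁻ u in Set.Icc (0 : ℝ) 1, ∫⁻ v in Set.Icc (0 : ℝ) 1,
        ENNReal.ofReal |z + A * Real.sin (2 * Real.pi * u + φ) +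
          B * Real.sin (2 * Real.pi * v + ψ)| ^ (-s) ≤ C * ENNReal.ofReal c ^ (-s) := by
  obtain ⟨C, hC, h⟩ := two_term_one s hs0 hs
  refine ⟨C, hC, ?_⟩
  intro A B c φ ψ z hc hA hB
  have h1 := h (A / c) (B / c) φ ψ (z / c) (by rwa [abs_div, abs_of_pos hc, one_le_div hc])
    (by rwa [abs_div, abs_of_pos hc, one_le_div hc])
  have hct : ENNReal.ofReal c ^ (-s) ≠ ⊤ := by
    rw [ENNReal.ofReal_rpow_of_pos hc]; exact ENNReal.ofReal_ne_top
  calc _ = ∫⁻ u in Set.Icc (0 : ℝ) 1, ∫⁻ v in Set.Icc (0 : ℝ) 1,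
        ENNReal.ofReal |z / c + A / c * Real.sin (2 * Real.pi * u + φ) +
          B / c * Real.sin (2 * Real.pi * v + ψ)| ^ (-s) * ENNReal.ofReal c ^ (-s) := by
        refine lintegral_congr fun u => lintegral_congr fun v => ?_
        rw [← ENNReal.mul_rpow_of_ne_top ENNReal.ofReal_ne_top ENNReal.ofReal_ne_top,
          ← ENNReal.ofReal_mul (abs_nonneg _)]
        congr 2
        nth_rewrite 4 [← abs_of_pos hc]
        rw [← abs_mul]
        congr 1
        field_simp
    _ = (∫⁻ u in Set.Icc (0 : ℝ) 1, ∫⁻ v in Set.Icc (0 : ℝ) 1,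
        ENNReal.ofReal |z / c + A / c * Real.sin (2 * Real.pi * u + φ) +
          B / c * Real.sin (2 * Real.pi * v + ψ)| ^ (-s)) * ENNReal.ofReal c ^ (-s) := by
        rw [← lintegral_mul_const' _ _ hct]
        refine lintegral_congr fun u => ?_
        rw [lintegral_mul_const' _ _ hct]
    _ ≤ _ := by gcongr

lemma unif_prob : IsProbabilityMeasure (volume.restrict (Set.Icc (0 : ℝ) 1)) :=
  ⟨by simp⟩

lemma unif_eq (μ : Measure (ℕ → ℝ)) (hμ : IsUniformProductMeasure μ) :
    haveI := unif_prob
    μ = Measure.infinitePi (fun _ : ℕ => volume.restrict (Set.Icc (0 : ℝ) 1)) := by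
  have := unif_prob
  refine Measure.eq_infinitePi _ ?_
  intro s t ht
  exact hμ s t ht

lemma unif_isProb (μ : Measure (ℕ → ℝ)) (hμ : IsUniformProductMeasure μ) :
    IsProbabilityMeasure μ := by
  have := hμ ∅ (fun _ => Set.univ) (fun _ => MeasurableSet.univ)
  exact ⟨by simpa using this⟩

lemma meas_upd (n : ℕ) : Measurable (fun q : (ℕ → ℝ) × ℝ => Function.update q.1 n q.2) := by
  refine measurable_pi_iff.2 fun i => ?_
  by_cases h : i = n
  · subst h; simpa using measurable_snd
  · simp only [Function.update_of_ne h]; fun_prop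

lemma map_update (μ : Measure (ℕ → ℝ)) (hμ : IsUniformProductMeasure μ) (n : ℕ) :
    (μ.prod (volume.restrict (Set.Icc (0 : ℝ) 1))).map
      (fun q : (ℕ → ℝ) × ℝ => Function.update q.1 n q.2) = μ := by
  have := unif_prob
  have := unif_isProb μ hμ
  have hm := meas_upd n
  conv_rhs => rw [unif_eq μ hμ]
  refine Measure.eq_infinitePi _ ?_
  intro s t ht
  rw [Measure.map_apply hm (MeasurableSet.pi s.countable_toSet (fun i _ => ht i))]
  by_cases hn : n ∈ s
  · have e : (fun q : (ℕ → ℝ) × ℝ => Function.update q.1 n q.2) ⁻¹' (Set.pi s t) =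
        {f : ℕ → ℝ | ∀ i ∈ s.erase n, f i ∈ t i} ×ˢ t n := by
      ext ⟨f, u⟩
      simp only [Set.mem_preimage, Set.mem_pi, Set.mem_prod, Set.mem_ofPred_eq, Finset.mem_coe,
        Finset.mem_erase]
      constructor
      · intro h
        refine ⟨fun i hi => ?_, ?_⟩
        · have := h i hi.2
          rwa [Function.update_of_ne hi.1] at this
        · simpa using h n hn
      · rintro ⟨h1, h2⟩ i hi
        by_cases hin : i = n
        · subst hin; simpa using h2
        · rw [Function.update_of_ne hin]; exact h1 i ⟨hin, hi⟩
    rw [e, Measure.prod_prod, hμ _ _ ht, Finset.prod_erase_mul _ _ hn]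
  · have e : (fun q : (ℕ → ℝ) × ℝ => Function.update q.1 n q.2) ⁻¹' (Set.pi s t) =
        {f : ℕ → ℝ | ∀ i ∈ s, f i ∈ t i} ×ˢ Set.univ := by
      ext ⟨f, u⟩
      simp only [Set.mem_preimage, Set.mem_pi, Set.mem_prod, Set.mem_ofPred_eq, Finset.mem_coe,
        Set.mem_univ, and_true]
      refine forall₂_congr fun i hi => ?_
      rw [Function.update_of_ne (by rintro rfl; exact hn hi)]
    rw [e, Measure.prod_prod, hμ _ _ ht, measure_univ, mul_one]

lemma lint_update (μ : Measure (ℕ → ℝ)) (hμ : IsUniformProductMeasure μ) (n : ℕ)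
    (F : (ℕ → ℝ) → ℝ≥0∞) (hF : Measurable F) :
    ∫⁻ Θ, F Θ ∂μ = ∫⁻ Θ, (∫⁻ u in Set.Icc (0 : ℝ) 1, F (Function.update Θ n u)) ∂μ := by
  have := unif_isProb μ hμ
  conv_lhs => rw [← map_update μ hμ n]
  rw [lintegral_map hF (meas_upd n)]
  exact lintegral_prod _ (hF.comp (meas_upd n)).aemeasurable

lemma summ_sin (q φ : ℕ → ℝ) (hq : Summable fun n => |q n|) (Θ : ℕ → ℝ) :
    Summable (fun n => q n * Real.sin (2 * Real.pi * Θ n + φ n)) := by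
  refine Summable.of_norm_bounded hq fun n => ?_
  rw [Real.norm_eq_abs, abs_mul]
  exact mul_le_of_le_one_right (abs_nonneg _) (Real.abs_sin_le_one _)

lemma tsum_upd (q φ : ℕ → ℝ) (hq : Summable fun n => |q n|) (Θ : ℕ → ℝ) (n : ℕ) (u : ℝ) :
    ∑' k, q k * Real.sin (2 * Real.pi * (Function.update Θ n u) k + φ k) =
      (∑' k, if k = n then 0 else q k * Real.sin (2 * Real.pi * Θ k + φ k)) +
        q n * Real.sin (2 * Real.pi * u + φ n) := by
  rw [(summ_sin q φ hq _).tsum_eq_add_tsum_ite n, add_comm]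
  congr 1
  · refine tsum_congr fun k => ?_
    by_cases h : k = n
    · simp [h]
    · simp [h]
  · simp

lemma rand_sum (s : ℝ) (hs0 : 0 < s) (hs : s < 1) : ∃ C : ℝ≥0∞, C ≠ ⊤ ∧
    ∀ (μ : Measure (ℕ → ℝ)) (_ : IsUniformProductMeasure μ) (q φ : ℕ → ℝ)
      (_ : Summable fun n => |q n|) (n m : ℕ) (c : ℝ), n ≠ m → 0 < c → c ≤ |q n| → c ≤ |q m| →
      ∫⁻ Θ, ENNReal.ofReal |∑' k, q k * Real.sin (2 * Real.pi * Θ k + φ k)| ^ (-s) ∂μ ≤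
        C * ENNReal.ofReal c ^ (-s) := by
  obtain ⟨C, hC, h⟩ := two_term s hs0 hs
  refine ⟨C, hC, ?_⟩
  intro μ hμ q φ hq n m c hnm hc hn hm
  have := unif_isProb μ hμ
  have hcont : Continuous (fun Θ : ℕ → ℝ => ∑' k, q k * Real.sin (2 * Real.pi * Θ k + φ k)) := by
    refine continuous_tsum (fun k => by fun_prop) hq fun k Θ => ?_
    rw [Real.norm_eq_abs, abs_mul]
    exact mul_le_of_le_one_right (abs_nonneg _) (Real.abs_sin_le_one _)
  have hF : Measurable (fun Θ : ℕ → ℝ =>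
      ENNReal.ofReal |∑' k, q k * Real.sin (2 * Real.pi * Θ k + φ k)| ^ (-s)) :=
    (ENNReal.measurable_ofReal.comp (hcont.abs.measurable)).pow_const _
  rw [lint_update μ hμ m _ hF, lint_update μ hμ n]
  · calc _ ≤ ∫⁻ Θ, C * ENNReal.ofReal c ^ (-s) ∂μ := by
          refine lintegral_mono fun Θ => ?_
          have h1 := h (q n) (q m) c (φ n) (φ m) (∑' k, if k = m then 0 else if k = n then 0 else
             q k * Real.sin (2 * Real.pi * Θ k + φ k)) hc hn hm
          refine le_trans (le_of_eq ?_) h1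
          refine lintegral_congr fun u => lintegral_congr fun v => ?_
          rw [tsum_upd q φ hq]
          congr 4
          have hq' : Summable fun k => |if k = m then 0 else q k| := by
            refine Summable.of_nonneg_of_le (fun _ => abs_nonneg _) (fun k => ?_) hq
            split_ifs <;> simp
          have h2 := tsum_upd (fun k => if k = m then 0 else q k) φ hq' Θ n u
          simp only [ite_mul, zero_mul, hnm, if_false] at h2
          rw [h2]
          congr 1
          refine tsum_congr fun k => ?_
          by_cases h3 : k = m <;> by_cases h4 : k = n <;> simp [h3, h4]
      _ = _ := by simp
  · exact Measurable.lintegral_prod_right' (f := fun p : (ℕ → ℝ) × ℝ => 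
      ENNReal.ofReal |∑' k, q k * Real.sin (2 * Real.pi * (Function.update p.1 m p.2) k + φ k)| ^ (-s)) 
      (hF.comp (meas_upd m))

/-- Energy method. -/
lemma energy {X : Type*} [MetricSpace X] [MeasurableSpace X] [BorelSpace X]
    [SecondCountableTopology X] (ν : Measure X) [IsFiniteMeasure ν] (σ : ℝ≥0)
    (S : Set X) (hS : MeasurableSet S) (hνS : ν S ≠ 0)
    (hE : ∫⁻ x, ∫⁻ y, edist x y ^ (-(σ : ℝ)) ∂ν ∂ν ≠ ⊤) :
    (σ : ℝ≥0∞) ≤ dimH S := by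
  have hm : Measurable (fun p : X × X => edist p.1 p.2 ^ (-(σ : ℝ))) :=
    measurable_edist.pow_const _
  set P : X → ℝ≥0∞ := fun x => ∫⁻ y, edist x y ^ (-(σ : ℝ)) ∂ν with hP
  have hPm : Measurable P := hm.lintegral_prod_right'
  have hae : ∀ᵐ x ∂ν, P x < ⊤ := ae_lt_top hPm hE
  have : ∃ M : ℕ, ν (S ∩ {x | P x ≤ M}) ≠ 0 := by
    by_contra hc
    push Not at hc
    have h1 : ν (⋃ M : ℕ, S ∩ {x | P x ≤ M}) = 0 := measure_iUnion_null hc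
    have h2 : ν (S ∩ {x | ¬ P x < ⊤}) = 0 :=
      measure_mono_null Set.inter_subset_right hae
    refine hνS (measure_mono_null ?_ (measure_union_null h1 h2))
    intro x hx
    by_cases h : P x < ⊤
    · left
      obtain ⟨M, hM⟩ := ENNReal.exists_nat_gt h.ne
      exact Set.mem_iUnion.2 ⟨M, hx, hM.le⟩
    · right; exact ⟨hx, h⟩
  obtain ⟨M, hM⟩ := this
  set A := S ∩ {x | P x ≤ M} with hA
  have hAm : MeasurableSet A := hS.inter (hPm measurableSet_Iic)
  have key : (((M : ℝ≥0∞) + 1)⁻¹) • ν.restrict A ≤ Measure.hausdorffMeasure (σ : ℝ) := by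
    refine Measure.le_hausdorffMeasure _ _ 1 one_pos ?_
    intro s hs
    rw [Measure.smul_apply, smul_eq_mul, Measure.restrict_apply' hAm]
    by_cases hne : (s ∩ A).Nonempty
    · obtain ⟨x, hxs, hxA⟩ := hne
      set r := Metric.ediam s with hr
      have h1 : s ∩ A ⊆ {y | edist x y ≤ r} := fun y hy => Metric.edist_le_ediam_of_mem hxs hy.1
      have h2 : r ^ (-(σ : ℝ)) * ν {y | edist x y ≤ r} ≤ M := by
        calc _ ≤ r ^ (-(σ : ℝ)) * ν {y | r ^ (-(σ : ℝ)) ≤ edist x y ^ (-(σ : ℝ))} := by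
              refine mul_le_mul_right (measure_mono fun y (hy : edist x y ≤ r) => ?_) _
              change r ^ (-(σ : ℝ)) ≤ edist x y ^ (-(σ : ℝ))
              rw [ENNReal.rpow_neg, ENNReal.rpow_neg]
              exact ENNReal.inv_le_inv.2 (ENNReal.rpow_le_rpow hy σ.2)
          _ ≤ P x := mul_meas_ge_le_lintegral (hm.comp measurable_prodMk_left) _
          _ ≤ M := hxA.2
      have h3 : ν {y | edist x y ≤ r} ≤ (M + 1) * r ^ (σ : ℝ) := by
        have hr1 : r ^ (σ : ℝ) ≠ ⊤ := ENNReal.rpow_ne_top_of_nonneg σ.2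
          (ne_top_of_le_ne_top ENNReal.one_ne_top hs)
        by_cases hr0 : r ^ (σ : ℝ) = 0
        · rw [ENNReal.rpow_neg, hr0, ENNReal.inv_zero] at h2
          have : ν {y | edist x y ≤ r} = 0 := by
            by_contra h0
            rw [ENNReal.top_mul h0] at h2
            simp at h2
          rw [this]; exact zero_le
        · rw [ENNReal.rpow_neg, mul_comm, ← div_eq_mul_inv,
            ENNReal.div_le_iff hr0 hr1] at h2
          refine h2.trans ?_
          gcongr
          exact le_self_add
      calc ((M : ℝ≥0∞) + 1)⁻¹ * ν (s ∩ A) ≤ ((M : ℝ≥0∞) + 1)⁻¹ * ((M + 1) * r ^ (σ : ℝ)) := by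
            gcongr
            exact (measure_mono h1).trans h3
        _ = r ^ (σ : ℝ) := by
            rw [← mul_assoc, ENNReal.inv_mul_cancel (by simp) (by finiteness), one_mul]
    · rw [Set.not_nonempty_iff_eq_empty.1 hne]; simp
  refine le_dimH_of_hausdorffMeasure_ne_zero ?_
  intro h0
  have h4 := key S
  rw [h0, Measure.smul_apply, smul_eq_mul, Measure.restrict_apply' hAm,
    Set.inter_eq_self_of_subset_right (by rw [hA]; exact Set.inter_subset_left)] at h4
  have h5 := nonpos_iff_eq_zero.1 h4
  rw [mul_eq_zero] at h5
  rcases h5 with h5 | h5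
  · rw [ENNReal.inv_eq_zero] at h5
    exact absurd h5 (by finiteness)
  · exact hM h5

lemma summ_b (b β : ℝ) (hb : 1 < b) (hβ : 0 < β) : Summable (fun n : ℕ => b ^ (-β * (n : ℝ))) := by
  have h : ∀ n : ℕ, b ^ (-β * (n : ℝ)) = (b ^ (-β)) ^ n := fun n => by
    rw [Real.rpow_mul (by linarith), Real.rpow_natCast]
  simp only [h]
  exact summable_geometric_of_lt_one (by positivity) (Real.rpow_lt_one_of_one_lt_of_neg hb (by linarith))

lemma bound_cos (b : ℝ) (hb : 1 < b) (r x : ℝ) : ‖b ^ r * Real.cos x‖ ≤ b ^ r := by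
  rw [Real.norm_eq_abs, abs_mul, abs_of_pos (by positivity : 0 < b ^ r)]
  exact mul_le_of_le_one_right (by positivity) (Real.abs_cos_le_one _)

lemma bound_sin (b : ℝ) (hb : 1 < b) (r x : ℝ) : ‖b ^ r * Real.sin x‖ ≤ b ^ r := by
  rw [Real.norm_eq_abs, abs_mul, abs_of_pos (by positivity : 0 < b ^ r)]
  exact mul_le_of_le_one_right (by positivity) (Real.abs_sin_le_one _)

lemma cont_W1 (b β : ℝ) (hb : 1 < b) (hβ : 0 < β) :
    Continuous (fun q : (ℕ → ℝ) × ℝ => W1 b β q.1 q.2) :=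
  continuous_tsum (fun n => by fun_prop) (summ_b b β hb hβ) fun n q => bound_cos b hb _ _

lemma cont_W2 (b β : ℝ) (hb : 1 < b) (hβ : 0 < β) :
    Continuous (fun q : (ℕ → ℝ) × ℝ => W2 b β q.1 q.2) :=
  continuous_tsum (fun n => by fun_prop) (summ_b b β hb hβ) fun n q => bound_sin b hb _ _

lemma W1_sub (b β : ℝ) (hb : 1 < b) (hβ : 0 < β) (Θ : ℕ → ℝ) (x y : ℝ) :
    W1 b β Θ x - W1 b β Θ y = ∑' n : ℕ, (-2 * b ^ (-β * (n : ℝ)) *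
      Real.sin (Real.pi * (b ^ n * (x - y)))) *
        Real.sin (2 * Real.pi * Θ n + Real.pi * (b ^ n * (x + y))) := by
  unfold W1
  rw [← Summable.tsum_sub (Summable.of_norm_bounded (summ_b b β hb hβ) fun n => bound_cos b hb _ _)
    (Summable.of_norm_bounded (summ_b b β hb hβ) fun n => bound_cos b hb _ _)]
  refine tsum_congr fun n => ?_
  rw [← mul_sub, Real.cos_sub_cos]
  have e1 : (2 * Real.pi * (b ^ n * x + Θ n) + 2 * Real.pi * (b ^ n * y + Θ n)) / 2 =
    2 * Real.pi * Θ n + Real.pi * (b ^ n * (x + y)) := by ring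
  have e2 : (2 * Real.pi * (b ^ n * x + Θ n) - 2 * Real.pi * (b ^ n * y + Θ n)) / 2 =
    Real.pi * (b ^ n * (x - y)) := by ring
  rw [e1, e2]; ring

lemma W2_sub (b β : ℝ) (hb : 1 < b) (hβ : 0 < β) (Θ : ℕ → ℝ) (x y : ℝ) :
    W2 b β Θ x - W2 b β Θ y = ∑' n : ℕ, (2 * b ^ (-β * (n : ℝ)) *
      Real.sin (Real.pi * (b ^ n * (x - y)))) *
        Real.sin (2 * Real.pi * Θ n + (Real.pi * (b ^ n * (x + y)) + Real.pi / 2)) := by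
  unfold W2
  rw [← Summable.tsum_sub (Summable.of_norm_bounded (summ_b b β hb hβ) fun n => bound_sin b hb _ _)
    (Summable.of_norm_bounded (summ_b b β hb hβ) fun n => bound_sin b hb _ _)]
  refine tsum_congr fun n => ?_
  rw [← mul_sub, Real.sin_sub_sin, ← add_assoc, Real.sin_add_pi_div_two]
  have e1 : (2 * Real.pi * (b ^ n * x + Θ n) + 2 * Real.pi * (b ^ n * y + Θ n)) / 2 =
    2 * Real.pi * Θ n + Real.pi * (b ^ n * (x + y)) := by ring
  have e2 : (2 * Real.pi * (b ^ n * x + Θ n) - 2 * Real.pi * (b ^ n * y + Θ n)) / 2 =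
    Real.pi * (b ^ n * (x - y)) := by ring
  rw [e1, e2]; ring

lemma pick (b β : ℝ) (hb : 1 < b) (hβ : 0 < β) (x y : ℝ) (hxy : x ≠ y)
    (hd : |x - y| ≤ 1 / (2 * b)) : ∃ n m : ℕ, n ≠ m ∧
      |x - y| ^ β / b ^ 2 ≤ |2 * b ^ (-β * (n : ℝ)) * Real.sin (Real.pi * (b ^ n * (x - y)))| ∧
      |x - y| ^ β / b ^ 2 ≤ |2 * b ^ (-β * (m : ℝ)) * Real.sin (Real.pi * (b ^ m * (x - y)))| := by
  have hb0 : 0 < b := by linarith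
  have hd0 : 0 < |x - y| := abs_pos.2 (sub_ne_zero.2 hxy)
  set d := |x - y| with hdd
  have h1 : b ≤ 1 / (2 * d) := by
    rw [le_div_iff₀ (by positivity)] at hd ⊢; linarith
  obtain ⟨N, hN1, hN2⟩ := exists_nat_pow_near (hb.le.trans h1) hb
  have hN0 : N ≠ 0 := by
    rintro rfl
    simp at hN2 h1; linarith
  obtain ⟨M, rfl⟩ := Nat.exists_eq_succ_of_ne_zero hN0
  have key : ∀ k : ℕ, k ≤ M + 1 → M ≤ k →
      d ^ β / b ^ 2 ≤ |2 * b ^ (-β * (k : ℝ)) * Real.sin (Real.pi * (b ^ k * (x - y)))| := by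
    intro k hk1 hk2
    have hk3 : b ^ k ≤ 1 / (2 * d) := (pow_le_pow_right₀ hb.le hk1).trans hN1
    have hk4 : 1 / (2 * d) < b ^ k * b ^ 2 := by
      refine hN2.trans_le ?_
      rw [← pow_add]; exact pow_le_pow_right₀ hb.le (by omega)
    have hbk : 0 < b ^ k := by positivity
    have h5 : b ^ k * d ≤ 1 / 2 := by
      rw [le_div_iff₀ (by positivity)] at hk3; linarith
    have h6 : 1 / b ^ 2 ≤ 2 * (b ^ k * d) := by
      rw [div_lt_iff₀ (by positivity)] at hk4
      rw [div_le_iff₀ (by positivity)]; nlinarith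
    have h7 : |Real.sin (Real.pi * (b ^ k * (x - y)))| = Real.sin (Real.pi * (b ^ k * d)) := by
      have hpos : 0 ≤ Real.sin (Real.pi * (b ^ k * d)) :=
        Real.sin_nonneg_of_nonneg_of_le_pi (by positivity) (by nlinarith [Real.pi_pos])
      rcases abs_cases (x - y) with h | h
      · rw [← h.1, ← hdd, abs_of_nonneg hpos]
      · have : x - y = - d := by rw [hdd]; linarith
        rw [this, mul_neg, mul_neg, Real.sin_neg, abs_neg, abs_of_nonneg hpos]
    have h8 : 1 / b ^ 2 ≤ Real.sin (Real.pi * (b ^ k * d)) := by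
      refine h6.trans ?_
      have := Real.mul_le_sin (x := Real.pi * (b ^ k * d)) (by positivity)
        (by nlinarith [Real.pi_pos])
      refine le_trans (le_of_eq ?_) this
      field_simp
    have h9 : d ^ β ≤ b ^ (-β * (k : ℝ)) := by
      have e : b ^ (-β * (k : ℝ)) = ((b ^ k)⁻¹) ^ β := by
        rw [Real.inv_rpow hbk.le, ← Real.rpow_natCast, ← Real.rpow_mul hb0.le,
          ← Real.rpow_neg hb0.le]
        congr 1; ring
      rw [e]
      refine Real.rpow_le_rpow hd0.le ?_ hβ.le
      rw [le_inv_comm₀ hd0 hbk]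
      refine hk3.trans ?_
      rw [one_div]
      exact inv_anti₀ hd0 (by linarith)
    have hbr : 0 < b ^ (-β * (k : ℝ)) := by positivity
    rw [abs_mul, h7, abs_of_pos (by positivity), div_eq_mul_one_div]
    have hdb : 0 < d ^ β := by positivity
    exact mul_le_mul (by linarith) h8 (by positivity) (by positivity)
  exact ⟨M, M + 1, by omega, key _ (by omega) (by omega), key _ (by omega) (by omega)⟩

lemma expW (b β : ℝ) (hb : 1 < b) (hβ : 0 < β) (s : ℝ) (hs0 : 0 < s) (hs : s < 1)
    (μ : Measure (ℕ → ℝ)) (hμ : IsUniformProductMeasure μ) : ∃ C : ℝ≥0∞, C ≠ ⊤ ∧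
    ∀ x y : ℝ, x ≠ y → |x - y| ≤ 1 / (2 * b) →
      (∫⁻ Θ, ENNReal.ofReal |W1 b β Θ x - W1 b β Θ y| ^ (-s) ∂μ ≤
        C * ENNReal.ofReal |x - y| ^ (-(β * s))) ∧
      (∫⁻ Θ, ENNReal.ofReal |W2 b β Θ x - W2 b β Θ y| ^ (-s) ∂μ ≤
        C * ENNReal.ofReal |x - y| ^ (-(β * s))) := by
  obtain ⟨C, hC, h⟩ := rand_sum s hs0 hs
  have hb0 : 0 < b := by linarith
  refine ⟨C * ENNReal.ofReal ((b ^ 2) ^ s), by finiteness, ?_⟩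
  intro x y hxy hd
  have hd0 : 0 < |x - y| := abs_pos.2 (sub_ne_zero.2 hxy)
  obtain ⟨n, m, hnm, hn, hm⟩ := pick b β hb hβ x y hxy hd
  have hc : 0 < |x - y| ^ β / b ^ 2 := by positivity
  have e : C * ENNReal.ofReal ((b ^ 2) ^ s) * ENNReal.ofReal |x - y| ^ (-(β * s)) =
      C * ENNReal.ofReal (|x - y| ^ β / b ^ 2) ^ (-s) := by
    rw [ENNReal.ofReal_rpow_of_pos hd0, ENNReal.ofReal_rpow_of_pos hc, mul_assoc,
      ← ENNReal.ofReal_mul (by positivity)]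
    congr 2
    rw [Real.div_rpow (by positivity) (by positivity), ← Real.rpow_mul hd0.le,
      Real.rpow_neg (by positivity : 0 ≤ b ^ 2), div_inv_eq_mul, mul_comm]
    congr 2; ring
  have hsum : Summable fun n : ℕ =>
      |2 * b ^ (-β * (n : ℝ)) * Real.sin (Real.pi * (b ^ n * (x - y)))| := by
    refine Summable.of_nonneg_of_le (fun _ => abs_nonneg _) (fun k => ?_)
      ((summ_b b β hb hβ).mul_left 2)
    rw [mul_assoc, abs_mul, abs_two]
    exact mul_le_mul_of_nonneg_left (bound_sin b hb _ _) (by norm_num)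
  have hneg : ∀ n : ℕ, |-2 * b ^ (-β * (n : ℝ)) * Real.sin (Real.pi * (b ^ n * (x - y)))| =
      |2 * b ^ (-β * (n : ℝ)) * Real.sin (Real.pi * (b ^ n * (x - y)))| := fun n => by
    rw [neg_mul, neg_mul, abs_neg]
  rw [e]
  simp only [W1_sub b β hb hβ, W2_sub b β hb hβ]
  constructor
  · refine h μ hμ (fun n : ℕ => -2 * b ^ (-β * (n : ℝ)) * Real.sin (Real.pi * (b ^ n * (x - y))))
      (fun n => Real.pi * (b ^ n * (x + y))) ?_ n m _ hnm hc ?_ ?_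
    · simpa only [hneg] using hsum
    · simpa only [hneg] using hn
    · simpa only [hneg] using hm
  · exact h μ hμ (fun n : ℕ => 2 * b ^ (-β * (n : ℝ)) * Real.sin (Real.pi * (b ^ n * (x - y))))
      (fun n => Real.pi * (b ^ n * (x + y)) + Real.pi / 2) hsum n m _ hnm hc hn hm

lemma rpow_anti {a b : ℝ≥0∞} (h : a ≤ b) {t : ℝ} (ht : 0 ≤ t) : b ^ (-t) ≤ a ^ (-t) := by
  rw [ENNReal.rpow_neg, ENNReal.rpow_neg]
  exact ENNReal.inv_le_inv.2 (ENNReal.rpow_le_rpow h ht)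

lemma kernel_le (D X Y : ℝ≥0∞) (hD : D ≠ 0) (hDt : D ≠ ⊤) (hX : X ≠ ⊤) (hY : Y ≠ ⊤) (σ s : ℝ)
    (hs : 0 ≤ s) (hσ : 2 * s ≤ σ) :
    (max D (max X Y)) ^ (-σ) ≤ D ^ (-(σ - 2 * s)) * (X ^ (-s) * Y ^ (-s)) := by
  set M := max D (max X Y) with hM
  have h0 : M ≠ 0 := by
    intro h; exact hD (le_antisymm (h ▸ le_max_left _ _) zero_le)
  have ht : M ≠ ⊤ := by simp [hM, hDt, hX, hY, max_eq_top]
  have e : M ^ (-σ) = M ^ (-(σ - 2 * s)) * (M ^ (-s) * M ^ (-s)) := by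
    rw [← ENNReal.rpow_add _ _ h0 ht, ← ENNReal.rpow_add _ _ h0 ht]; congr 1; ring
  rw [e]
  refine mul_le_mul' (rpow_anti (le_max_left _ _) (by linarith))
    (mul_le_mul' (rpow_anti ?_ hs) (rpow_anti ?_ hs))
  · exact (le_max_left _ _).trans (le_max_right _ _)
  · exact (le_max_right _ _).trans (le_max_right _ _)

set_option maxHeartbeats 1000000 in
lemma dim_gen (b β : ℝ) (hb : 1 < b) (hβ : β ∈ Set.Ioo (0 : ℝ) (1 / 2))
    (μ : Measure (ℕ → ℝ)) [IsProbabilityMeasure μ] (σ s : ℝ) (hσ2 : 2 < σ)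
    (hs0 : 0 < s) (hs : s < 1) (hs1 : σ - 1 < s * (2 * (1 - β)))
    (V1 V2 : (ℕ → ℝ) → ℝ → ℝ) (c1 : Continuous (fun q : (ℕ → ℝ) × ℝ => V1 q.1 q.2))
    (c2 : Continuous (fun q : (ℕ → ℝ) × ℝ => V2 q.1 q.2)) (C : ℝ≥0∞) (hC : C ≠ ⊤)
    (hexp : ∀ x y : ℝ, x ≠ y → |x - y| ≤ 1 / (2 * b) →
      (∫⁻ Θ, ENNReal.ofReal |V1 Θ x - V1 Θ y| ^ (-s) ∂μ ≤
        C * ENNReal.ofReal |x - y| ^ (-(β * s))) ∧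
      (∫⁻ Θ, ENNReal.ofReal |V2 Θ x - V2 Θ y| ^ (-s) ∂μ ≤
        C * ENNReal.ofReal |x - y| ^ (-(β * s)))) :
    ∀ᵐ p ∂ μ.prod μ, ENNReal.ofReal σ ≤
      dimH {q : ℝ × ℝ × ℝ | ∃ t ∈ Set.Icc (0 : ℝ) 1, q = (t, V1 p.1 t, V2 p.2 t)} := by
  have hβ0 := hβ.1
  have hβ1 := hβ.2
  have hb0 : 0 < b := by linarith
  set γ := σ - 2 * s + 2 * (β * s) with hγ
  have hγ1 : γ < 1 := by rw [hγ]; nlinarith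
  have hγ0 : 0 < γ := by rw [hγ]; nlinarith [mul_pos hβ0 hs0]
  set δ := 1 / (2 * b) with hδ
  have hδ0 : 0 < δ := by positivity
  have hδ1 : δ ≤ 1 := by rw [hδ, div_le_one (by positivity)]; linarith
  set ρ := volume.restrict (Set.Icc (0 : ℝ) δ) with hρ
  let G : (ℕ → ℝ) × (ℕ → ℝ) → ℝ → ℝ × ℝ × ℝ := fun p t => (t, V1 p.1 t, V2 p.2 t)
  have hGc : Continuous (fun q : ((ℕ → ℝ) × (ℕ → ℝ)) × ℝ => G q.1 q.2) := by
    have f1 : Continuous (fun q : ((ℕ → ℝ) × (ℕ → ℝ)) × ℝ => (q.1.1, q.2)) := by fun_prop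
    have f2 : Continuous (fun q : ((ℕ → ℝ) × (ℕ → ℝ)) × ℝ => (q.1.2, q.2)) := by fun_prop
    exact continuous_snd.prodMk ((c1.comp f1).prodMk (c2.comp f2))
  have hGp : ∀ p, Continuous (G p) := fun p => hGc.comp (Continuous.prodMk_right p)
  set k : ((ℕ → ℝ) × (ℕ → ℝ)) → ℝ × ℝ → ℝ≥0∞ := fun p z => edist (G p z.1) (G p z.2) ^ (-σ) with hk
  have hkm : Measurable (Function.uncurry k) := by
    have h1 : Continuous (fun q : ((ℕ → ℝ) × (ℕ → ℝ)) × (ℝ × ℝ) =>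
        edist (G q.1 q.2.1) (G q.1 q.2.2)) := by
      refine Continuous.edist (hGc.comp (g := fun q : ((ℕ → ℝ) × (ℕ → ℝ)) × ℝ => G q.1 q.2)
        (f := fun q : ((ℕ → ℝ) × (ℕ → ℝ)) × (ℝ × ℝ) => (q.1, q.2.1)) (by fun_prop)) 
        (hGc.comp (g := fun q : ((ℕ → ℝ) × (ℕ → ℝ)) × ℝ => G q.1 q.2)
        (f := fun q : ((ℕ → ℝ) × (ℕ → ℝ)) × (ℝ × ℝ) => (q.1, q.2.2)) (by fun_prop))
    exact h1.measurable.pow_const _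
  -- pointwise expectation bound
  have hpt : ∀ x ∈ Set.Icc (0 : ℝ) δ, ∀ y ∈ Set.Icc (0 : ℝ) δ, y ≠ x →
      ∫⁻ p, k p (x, y) ∂(μ.prod μ) ≤ C * C * ENNReal.ofReal |y + -x| ^ (-γ) := by
    intro x hx y hy hyx
    have hd : |x - y| ≤ δ := by
      rw [abs_le]; constructor <;> linarith [hx.1, hx.2, hy.1, hy.2]
    have hd0 : 0 < |x - y| := abs_pos.2 (sub_ne_zero.2 hyx.symm)
    obtain ⟨e1, e2⟩ := hexp x y hyx.symm hd
    set D := ENNReal.ofReal |x - y| with hD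
    have hDne : D ≠ 0 := by simpa [hD] using sub_ne_zero.2 hyx.symm
    have hDt : D ≠ ⊤ := ENNReal.ofReal_ne_top
    have hm1 : Measurable (fun Θ : ℕ → ℝ => ENNReal.ofReal |V1 Θ x - V1 Θ y| ^ (-s)) := by
      have : Continuous (fun Θ : ℕ → ℝ => |V1 Θ x - V1 Θ y|) :=
        ((c1.comp (Continuous.prodMk_left x)).sub (c1.comp (Continuous.prodMk_left y))).abs
      exact (ENNReal.measurable_ofReal.comp this.measurable).pow_const _
    have hm2 : Measurable (fun Θ : ℕ → ℝ => ENNReal.ofReal |V2 Θ x - V2 Θ y| ^ (-s)) := by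
      have : Continuous (fun Θ : ℕ → ℝ => |V2 Θ x - V2 Θ y|) :=
        ((c2.comp (Continuous.prodMk_left x)).sub (c2.comp (Continuous.prodMk_left y))).abs
      exact (ENNReal.measurable_ofReal.comp this.measurable).pow_const _
    calc ∫⁻ p, k p (x, y) ∂(μ.prod μ) ≤ ∫⁻ p, D ^ (-(σ - 2 * s)) *
          (ENNReal.ofReal |V1 p.1 x - V1 p.1 y| ^ (-s) *
            ENNReal.ofReal |V2 p.2 x - V2 p.2 y| ^ (-s)) ∂(μ.prod μ) := by
          refine lintegral_mono fun p => ?_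
          have he : ∀ u v : ℝ, edist u v = ENNReal.ofReal |u - v| := fun u v => by
            rw [edist_dist, Real.dist_eq]
          simp only [hk, G, Prod.edist_eq, he]
          exact kernel_le _ _ _ hDne hDt ENNReal.ofReal_ne_top ENNReal.ofReal_ne_top σ s hs0.le
            (by linarith)
      _ = D ^ (-(σ - 2 * s)) * ((∫⁻ Θ, ENNReal.ofReal |V1 Θ x - V1 Θ y| ^ (-s) ∂μ) *
            ∫⁻ Θ, ENNReal.ofReal |V2 Θ x - V2 Θ y| ^ (-s) ∂μ) := by
          rw [← lintegral_prod_mul hm1.aemeasurable hm2.aemeasurable]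
          exact lintegral_const_mul _
            ((hm1.comp measurable_fst).mul (hm2.comp measurable_snd))
      _ ≤ D ^ (-(σ - 2 * s)) * ((C * D ^ (-(β * s))) * (C * D ^ (-(β * s)))) := by gcongr
      _ = C * C * (D ^ (-(σ - 2 * s)) * (D ^ (-(β * s)) * D ^ (-(β * s)))) := by ring
      _ = C * C * ENNReal.ofReal |y + -x| ^ (-γ) := by
          have hyx2 : |y + -x| = |x - y| := by rw [← sub_eq_add_neg, abs_sub_comm]
          rw [← ENNReal.rpow_add _ _ hDne hDt, ← ENNReal.rpow_add _ _ hDne hDt, hyx2, ← hD, hγ]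
          congr 2; ring
  set K : ℝ≥0∞ := volume (Set.Icc (0 : ℝ) δ) +
    ∫⁻ w in Set.Icc (-1 : ℝ) 1, ENNReal.ofReal |w| ^ (-γ) with hK
  have hKt : K ≠ ⊤ := by
    have := sing_finite γ hγ1
    rw [hK, Real.volume_Icc]
    finiteness
  have htot : ∫⁻ p, ∫⁻ z, k p z ∂(ρ.prod ρ) ∂(μ.prod μ) ≠ ⊤ := by
    rw [lintegral_lintegral_swap hkm.aemeasurable, lintegral_prod]
    · refine ne_top_of_le_ne_top (b := ∫⁻ x, C * C * K ∂ρ) ?_ ?_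
      · rw [lintegral_const, hρ]
        simp only [MeasurableSet.univ, Measure.restrict_apply, Set.univ_inter, Real.volume_Icc]
        finiteness
      · refine setLIntegral_mono' measurableSet_Icc fun x hx => ?_
        calc _ ≤ ∫⁻ y, C * C * ENNReal.ofReal |y + -x| ^ (-γ) ∂ρ := by
              refine lintegral_mono_ae ?_
              have h1 : ∀ᵐ y ∂ρ, y ≠ x := by
                refine ae_restrict_of_ae ?_
                exact Measure.ae_ne volume x
              have h2 : ∀ᵐ y ∂ρ, y ∈ Set.Icc (0 : ℝ) δ := ae_restrict_mem measurableSet_Icc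
              filter_upwards [h1, h2] with y hy1 hy2
              exact hpt x hx y hy2 hy1
          _ = C * C * ∫⁻ y, ENNReal.ofReal |y + -x| ^ (-γ) ∂ρ := 
              lintegral_const_mul' _ _ (by finiteness)
          _ ≤ C * C * K := by
              gcongr
              exact sing_bound γ hγ0 _ _
    · refine Measurable.aemeasurable ?_
      exact Measurable.lintegral_prod_right' (f := fun q : (ℝ × ℝ) × ((ℕ → ℝ) × (ℕ → ℝ)) =>
        k q.2 q.1) (hkm.comp measurable_swap)
  have hkm2 : Measurable (fun p => ∫⁻ z, k p z ∂(ρ.prod ρ)) := hkm.lintegral_prod_right'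
  filter_upwards [ae_lt_top hkm2 htot] with p hp
  have hS : IsCompact ({q : ℝ × ℝ × ℝ | ∃ t ∈ Set.Icc (0 : ℝ) 1, q = (t, V1 p.1 t, V2 p.2 t)}) := by
    have : {q : ℝ × ℝ × ℝ | ∃ t ∈ Set.Icc (0 : ℝ) 1, q = (t, V1 p.1 t, V2 p.2 t)} = G p '' Set.Icc 0 1 := by
      ext q; simp only [Set.mem_ofPred_eq, Set.mem_image, G, eq_comm]
    rw [this]; exact isCompact_Icc.image (hGp p)
  have hGm := (hGp p).measurable
  refine energy (ρ.map (G p)) σ.toNNReal _ hS.measurableSet ?_ ?_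
  · rw [Measure.map_apply hGm hS.measurableSet]
    have : Set.Icc (0 : ℝ) δ ⊆ G p ⁻¹' {q : ℝ × ℝ × ℝ | ∃ t ∈ Set.Icc (0 : ℝ) 1, q = (t, V1 p.1 t, V2 p.2 t)} := 
      fun t ht => ⟨t, ⟨ht.1, ht.2.trans hδ1⟩, rfl⟩
    rw [hρ, Measure.restrict_apply' measurableSet_Icc, Set.inter_eq_self_of_subset_right this]
    simpa using hδ0
  · rw [Real.coe_toNNReal σ (by linarith)]
    have hem : Measurable (fun q : (ℝ × ℝ × ℝ) × (ℝ × ℝ × ℝ) => edist q.1 q.2 ^ (-σ)) :=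
      measurable_edist.pow_const _
    rw [lintegral_map hem.lintegral_prod_right' hGm]
    have e : ∀ x, ∫⁻ y, edist (G p x) y ^ (-σ) ∂(ρ.map (G p)) = ∫⁻ y, k p (x, y) ∂ρ := fun x =>
      lintegral_map (hem.comp measurable_prodMk_left) hGm
    simp only [e]
    rw [lintegral_prod] at hp
    · exact hp.ne
    · exact (hkm.comp measurable_prodMk_left).aemeasurable

lemma dim_sigma (b β : ℝ) (hb : 1 < b) (hβ : β ∈ Set.Ioo (0 : ℝ) (1 / 2))
    (μ : Measure (ℕ → ℝ)) (hμ : IsUniformProductMeasure μ) (σ : ℝ) (hσ2 : 2 < σ)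
    (hσ : σ < 3 - 2 * β) :
    ∀ᵐ p ∂ μ.prod μ, ENNReal.ofReal σ ≤ dimH (Wgraph b β p.1 p.2) := by
  have hβ0 := hβ.1
  have hβ1 := hβ.2
  have := unif_isProb μ hμ
  have hb0 : 0 < b := by linarith
  obtain ⟨s, hs1, hs⟩ : ∃ s, (σ - 1) / (2 * (1 - β)) < s ∧ s < 1 := by
    refine exists_between ?_
    rw [div_lt_one (by linarith)]; linarith
  have hs0 : 0 < s := lt_trans (div_pos (by linarith) (by linarith)) hs1
  rw [div_lt_iff₀ (by linarith)] at hs1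
  obtain ⟨C, hC, hexp⟩ := expW b β hb hβ0 s hs0 hs μ hμ
  exact dim_gen b β hb hβ μ σ s hσ2 hs0 hs hs1 (W1 b β) (W2 b β) (cont_W1 b β hb hβ0)
    (cont_W2 b β hb hβ0) C hC hexp

/-- for a.e. pair of phase sequences, the Hausdorff dimension of the
graph is at least `3 - 2β`. -/
theorem stmt_8 (b β : ℝ) (hb : 1 < b) (hβ : β ∈ Set.Ioo (0 : ℝ) (1 / 2))
    (μ : Measure (ℕ → ℝ)) (hμ : IsUniformProductMeasure μ) :
    ∀ᵐ p ∂ μ.prod μ, ENNReal.ofReal (3 - 2 * β) ≤ dimH (Wgraph b β p.1 p.2) := by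
  have hβ1 := hβ.2
  have hall : ∀ᵐ p ∂ μ.prod μ, ∀ n : ℕ,
      ENNReal.ofReal (3 - 2 * β - (1 - 2 * β) * (1 / ((n + 1 : ℕ) + 1 : ℝ))) ≤
        dimH (Wgraph b β p.1 p.2) := by
    refine ae_all_iff.2 fun n => ?_
    have h1 : (0 : ℝ) < 1 / ((n + 1 : ℕ) + 1 : ℝ) := by positivity
    have h2 : 1 / ((n + 1 : ℕ) + 1 : ℝ) < 1 := by
      rw [div_lt_one (by positivity)]; push_cast; linarith [n.cast_nonneg (α := ℝ)]
    refine dim_sigma b β hb hβ μ hμ _ ?_ ?_ <;> nlinarith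
  filter_upwards [hall] with p hp
  have ht : Filter.Tendsto (fun n : ℕ => ENNReal.ofReal
      (3 - 2 * β - (1 - 2 * β) * (1 / ((n + 1 : ℕ) + 1 : ℝ)))) Filter.atTop
      (nhds (ENNReal.ofReal (3 - 2 * β))) := by
    refine ENNReal.tendsto_ofReal ?_
    have h := (tendsto_one_div_add_atTop_nhds_zero_nat (𝕜 := ℝ)).comp (Filter.tendsto_add_atTop_nat 1)
    have h' := (h.const_mul (1 - 2 * β)).const_sub (3 - 2 * β)
    simpa only [mul_zero, sub_zero, Function.comp_def] using h'
  exact le_of_tendsto' ht hp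
end

section
/- Let c ≠ 0 and r ∈ ℝ, and let θ be a uniform random variable on [0,1]. Then the real random variable Z = c·sin(r + 2πθ) has a probability density function with respect to Lebesgue measure given by h(z) = 1/(π√(c² − z²)) for |z| < |c| and h(z) = 0 for |z| ≥ |c|. -/
open MeasureTheory

lemma half_aux (c r b : ℝ) (hc : c ≠ 0) (hb : r + 2 * Real.pi * b = -(Real.pi / 2))
    (g : ℝ → ENNReal) :
    ∫⁻ z in Set.Ioo (-|c|) |c|,
      ENNReal.ofReal (if |z| < |c| then 1 / (Real.pi * Real.sqrt (c ^ 2 - z ^ 2)) else 0) * g z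
    = 2 * ∫⁻ θ in Set.Ioo b (b + 1/2), g (c * Real.sin (r + 2 * Real.pi * θ)) := by
  have hpi := Real.pi_pos
  have hc' : 0 < |c| := abs_pos.mpr hc
  have hrange : ∀ θ ∈ Set.Ioo b (b + 1/2),
      r + 2 * Real.pi * θ ∈ Set.Ioo (-(Real.pi / 2)) (Real.pi / 2) := by
    rintro θ ⟨h1, h2⟩
    constructor <;> nlinarith
  have habs : ∀ θ ∈ Set.Ioo b (b + 1/2), |c * Real.sin (r + 2 * Real.pi * θ)| < |c| := by
    intro θ hθ
    have hcos := Real.cos_pos_of_mem_Ioo (hrange θ hθ)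
    rw [← sq_lt_sq]
    have := Real.sin_sq_add_cos_sq (r + 2 * Real.pi * θ)
    have h3 : 0 < c ^ 2 * Real.cos (r + 2 * Real.pi * θ) ^ 2 := by positivity
    nlinarith
  have himg : (fun θ : ℝ => c * Real.sin (r + 2 * Real.pi * θ)) '' Set.Ioo b (b + 1/2)
      = Set.Ioo (-|c|) |c| := by
    ext z
    constructor
    · rintro ⟨θ, hθ, rfl⟩
      exact abs_lt.mp (habs θ hθ)
    · intro hz
      have hz' : |z / c| < 1 := by
        rw [abs_div, div_lt_one hc']
        exact abs_lt.mpr hz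
      obtain ⟨h1, h2⟩ := abs_lt.mp hz'
      have h3 := Real.neg_pi_div_two_lt_arcsin.mpr h1
      have h4 := Real.arcsin_lt_pi_div_two.mpr h2
      have h5 : r + 2 * Real.pi * ((Real.arcsin (z / c) - r) / (2 * Real.pi))
          = Real.arcsin (z / c) := by
        field_simp
        ring
      refine ⟨(Real.arcsin (z / c) - r) / (2 * Real.pi), ⟨?_, ?_⟩, ?_⟩
      · rw [lt_div_iff₀ (by positivity)]
        nlinarith
      · rw [div_lt_iff₀ (by positivity)]
        nlinarith
      · simp only [h5]
        rw [Real.sin_arcsin h1.le h2.le]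
        field_simp
  rw [← himg, lintegral_image_eq_lintegral_abs_deriv_mul measurableSet_Ioo
    (f' := fun θ => c * (Real.cos (r + 2 * Real.pi * θ) * (2 * Real.pi))),
    ← lintegral_const_mul' _ _ (by simp)]
  · refine setLIntegral_congr_fun measurableSet_Ioo ?_
    intro θ hθ
    have hcos := Real.cos_pos_of_mem_Ioo (hrange θ hθ)
    simp only
    rw [if_pos (habs θ hθ), ← mul_assoc, ← ENNReal.ofReal_mul (abs_nonneg _)]
    congr 1
    have h1 : c ^ 2 - (c * Real.sin (r + 2 * Real.pi * θ)) ^ 2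
        = (|c| * Real.cos (r + 2 * Real.pi * θ)) ^ 2 := by
      rw [mul_pow, mul_pow, sq_abs, Real.cos_sq']
      ring
    rw [h1, Real.sqrt_sq (by positivity), abs_mul, abs_of_pos (by positivity :
      0 < Real.cos (r + 2 * Real.pi * θ) * (2 * Real.pi))]
    rw [← ENNReal.ofReal_ofNat 2]
    congr 1
    field_simp
  · intro θ _
    have h0 : HasDerivAt (fun θ : ℝ => r + 2 * Real.pi * θ) (2 * Real.pi) θ := by
      simpa using ((hasDerivAt_id θ).const_mul (2 * Real.pi)).const_add r
    exact (h0.sin.const_mul c).hasDerivWithinAt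
  · intro x hx y hy hxy
    have h1 := mul_left_cancel₀ hc hxy
    have h2 := Real.injOn_sin (Set.Ioo_subset_Icc_self (hrange x hx))
      (Set.Ioo_subset_Icc_self (hrange y hy)) h1
    have h3 : 2 * Real.pi * x = 2 * Real.pi * y := by linarith
    exact mul_left_cancel₀ (by positivity) h3

/-- if `θ` is uniform on `[0,1]`, the law of `Z = c sin(r + 2πθ)` has
density `z ↦ 1/(π√(c² - z²))` on `|z| < |c|` (and `0` elsewhere) with respect to
Lebesgue measure. -/
theorem stmt_12 (c r : ℝ) (hc : c ≠ 0) :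
    Measure.map (fun θ : ℝ => c * Real.sin (r + 2 * Real.pi * θ))
        (volume.restrict (Set.Icc (0 : ℝ) 1)) =
      volume.withDensity (fun z => ENNReal.ofReal
        (if |z| < |c| then 1 / (Real.pi * Real.sqrt (c ^ 2 - z ^ 2)) else 0)) := by
  have hpi := Real.pi_pos
  have hmeas : Measurable (fun θ : ℝ => c * Real.sin (r + 2 * Real.pi * θ)) := by fun_prop
  ext A hA
  set g : ℝ → ENNReal := A.indicator 1 with hg
  have hgm : Measurable g := measurable_one.indicator hA
  obtain ⟨b, hb⟩ : ∃ b : ℝ, r + 2 * Real.pi * b = -(Real.pi / 2) :=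
    ⟨(-(Real.pi / 2) - r) / (2 * Real.pi), by field_simp; ring⟩
  have e1 := half_aux c r b hc hb g
  have e2 := half_aux (-c) (r - Real.pi) (b + 1/2) (neg_ne_zero.mpr hc) (by linarith) g
  have hs : ∀ θ : ℝ, -c * Real.sin (r - Real.pi + 2 * Real.pi * θ)
      = c * Real.sin (r + 2 * Real.pi * θ) := by
    intro θ
    rw [show r - Real.pi + 2 * Real.pi * θ = (r + 2 * Real.pi * θ) - Real.pi by ring,
      Real.sin_sub_pi]
    ring
  simp only [hs, abs_neg, neg_sq] at e2
  have hper : ∫⁻ θ in Set.Ioc (0:ℝ) (0 + 1), g (c * Real.sin (r + 2 * Real.pi * θ))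
      = ∫⁻ θ in Set.Ioc b (b + 1), g (c * Real.sin (r + 2 * Real.pi * θ)) := by
    refine (isAddFundamentalDomain_Ioc one_pos 0).setLIntegral_eq
      (isAddFundamentalDomain_Ioc one_pos b) _ ?_
    rintro ⟨x, hx⟩ θ
    obtain ⟨n, rfl⟩ := AddSubgroup.mem_zmultiples_iff.mp hx
    congr 2
    rw [← Real.sin_add_int_mul_two_pi (r + 2 * Real.pi * θ) n]
    congr 1
    simp [AddSubgroup.vadd_def]
    ring
  have hsplit : ∫⁻ θ in Set.Ioc b (b + 1), g (c * Real.sin (r + 2 * Real.pi * θ))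
      = (∫⁻ θ in Set.Ioo b (b + 1/2), g (c * Real.sin (r + 2 * Real.pi * θ)))
        + ∫⁻ θ in Set.Ioo (b + 1/2) (b + 1/2 + 1/2), g (c * Real.sin (r + 2 * Real.pi * θ)) := by
    rw [← Set.Ioc_union_Ioc_eq_Ioc (by linarith : b ≤ b + 1/2) (by linarith : b + 1/2 ≤ b + 1),
      lintegral_union measurableSet_Ioc (Set.Ioc_disjoint_Ioc_of_le le_rfl),
      setLIntegral_congr Ioo_ae_eq_Ioc, setLIntegral_congr Ioo_ae_eq_Ioc]
    norm_num [add_assoc]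
  rw [Measure.map_apply hmeas hA, withDensity_apply _ hA]
  have hL : (volume.restrict (Set.Icc (0:ℝ) 1))
      ((fun θ : ℝ => c * Real.sin (r + 2 * Real.pi * θ)) ⁻¹' A)
      = ∫⁻ θ in Set.Ioc (0:ℝ) (0 + 1), g (c * Real.sin (r + 2 * Real.pi * θ)) := by
    rw [zero_add, setLIntegral_congr Ioc_ae_eq_Icc, ← lintegral_indicator_one (hmeas hA)]
    rfl
  have hR : ∫⁻ z in A, ENNReal.ofReal
        (if |z| < |c| then 1 / (Real.pi * Real.sqrt (c ^ 2 - z ^ 2)) else 0)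
      = ∫⁻ z in Set.Ioo (-|c|) |c|, ENNReal.ofReal
        (if |z| < |c| then 1 / (Real.pi * Real.sqrt (c ^ 2 - z ^ 2)) else 0) * g z := by
    rw [← lintegral_indicator hA, ← lintegral_indicator measurableSet_Ioo]
    congr 1
    ext z
    by_cases h1 : z ∈ A <;> by_cases h2 : |z| < |c| <;>
      simp [hg, Set.indicator, h1, h2, ← abs_lt]
  rw [hL, hR, hper, hsplit]
  have h2 : (2 : ENNReal) ≠ 0 := two_ne_zero
  refine (ENNReal.mul_right_inj h2 (by simp)).mp ?_
  rw [mul_add, ← e1, ← e2, two_mul]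
end

section
/- Let b > 1 and β ∈ (0, 1/2). Let x, y ∈ [0,1] and let k ≥ 2 be an integer such that 1/(2b^{k+1}) < |x − y| < 1/(2b^k). Then for each n ∈ {k−2, k−1, k}, one has |2 b^{−βn} sin(π bⁿ (y − x))| > 2^{1+β} sin(π/(2b³)) |x − y|^β. -/
/-- if `k ≥ 2` and `1/(2b^{k+1}) < |x-y| < 1/(2b^k)`, then for each
`n ∈ {k-2, k-1, k}` the amplitude `|2 b^{-βn} sin(π bⁿ(y-x))|` exceeds
`2^{1+β} sin(π/(2b³)) |x-y|^β`. -/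
theorem stmt_16 (b β : ℝ) (hb : 1 < b) (hβ : β ∈ Set.Ioo (0 : ℝ) (1 / 2))
    (x y : ℝ) (hx : x ∈ Set.Icc (0 : ℝ) 1) (hy : y ∈ Set.Icc (0 : ℝ) 1)
    (k : ℕ) (hk : 2 ≤ k)
    (h1 : 1 / (2 * b ^ (k + 1)) < |x - y|) (h2 : |x - y| < 1 / (2 * b ^ k)) :
    ∀ n ∈ ({k - 2, k - 1, k} : Set ℕ),
      2 ^ ((1 : ℝ) + β) * Real.sin (Real.pi / (2 * b ^ 3)) * |x - y| ^ β <
        |2 * b ^ (-β * (n : ℝ)) * Real.sin (Real.pi * b ^ n * (y - x))| := by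
  obtain ⟨hβ0, -⟩ := hβ
  intro n hn
  have hn' : n ≤ k ∧ k + 1 ≤ n + 3 := by
    simp only [Set.mem_insert_iff, Set.mem_singleton_iff] at hn
    omega
  obtain ⟨hnk, hkn⟩ := hn'
  have hb0 : 0 < b := by linarith
  have hbn : 0 < b ^ n := by positivity
  have hpi := Real.pi_pos
  set d := |x - y| with hd
  have hd0 : 0 < d := lt_trans (by positivity) h1
  have hub : 2 * d * b ^ n < 1 := by
    have hp : b ^ n ≤ b ^ k := pow_le_pow_right₀ hb.le hnk
    rw [lt_div_iff₀ (by positivity)] at h2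
    nlinarith
  have hlb : 1 < 2 * d * b ^ n * b ^ 3 := by
    have hp : b ^ (k + 1) ≤ b ^ (n + 3) := pow_le_pow_right₀ hb.le hkn
    rw [div_lt_iff₀ (by positivity)] at h1
    rw [pow_add b n 3] at hp
    nlinarith
  have hb3 : 0 < b ^ 3 := by positivity
  have hlt : Real.pi / (2 * b ^ 3) < Real.pi * b ^ n * d := by
    rw [div_lt_iff₀ (by positivity)]
    nlinarith
  have hle : Real.pi * b ^ n * d < Real.pi / 2 := by nlinarith
  have h3pos : 0 < Real.pi / (2 * b ^ 3) := by positivity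
  have hsin : Real.sin (Real.pi / (2 * b ^ 3)) < Real.sin (Real.pi * b ^ n * d) :=
    Real.sin_lt_sin_of_lt_of_le_pi_div_two (by linarith) hle.le hlt
  have hsin0 : 0 < Real.sin (Real.pi / (2 * b ^ 3)) :=
    Real.sin_pos_of_pos_of_lt_pi h3pos (by linarith)
  have habs : |Real.sin (Real.pi * b ^ n * (y - x))| = Real.sin (Real.pi * b ^ n * d) := by
    rcases abs_cases (x - y) with ⟨h, _⟩ | ⟨h, _⟩
    · have e : Real.pi * b ^ n * (y - x) = -(Real.pi * b ^ n * d) := by rw [hd, h]; ring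
      rw [e, Real.sin_neg, abs_neg, abs_of_pos (hsin0.trans hsin)]
    · have e : Real.pi * b ^ n * (y - x) = Real.pi * b ^ n * d := by rw [hd, h]; ring
      rw [e, abs_of_pos (hsin0.trans hsin)]
  have hB : (2 * d) ^ β < b ^ (-β * (n : ℝ)) := by
    have e : b ^ (-β * (n : ℝ)) = ((b ^ n)⁻¹) ^ β := by
      rw [← Real.rpow_natCast b n, ← Real.rpow_neg hb0.le, ← Real.rpow_mul hb0.le]
      congr 1
      ring
    rw [e]
    refine Real.rpow_lt_rpow (by positivity) ?_ hβ0
    rw [inv_eq_one_div, lt_div_iff₀ hbn]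
    exact hub
  have hBpos : 0 < (2 * d) ^ β := by positivity
  rw [abs_mul, habs, abs_of_pos (by positivity), Real.rpow_add (by norm_num), Real.rpow_one]
  have e2 : 2 * 2 ^ β * Real.sin (Real.pi / (2 * b ^ 3)) * d ^ β
      = 2 * ((2 * d) ^ β * Real.sin (Real.pi / (2 * b ^ 3))) := by
    rw [Real.mul_rpow (by norm_num) hd0.le]
    ring
  rw [e2, mul_assoc]
  have := mul_lt_mul'' hB hsin hBpos.le hsin0.le
  linarith
end
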